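/- arXiv:1411.5577 — 2 statements merged into one kernel-verified Lean document; each statement's English description precedes it below -/
import Mathlib

section
/- Let m ≥ 2, let x ∈ ℝ^m, let v ∈ ℝ^m, and let W ⊆ ℝ^m be an open set containing x. Then there exists a smooth vector field X : ℝ^m → ℝ^m with compact support contained in W, such that div X = 0 everywhere (the trace of the Fréchet derivative of X vanishes identically), and X equals the constant vector v on some open neighborhood of x. -/
/-- For `m ≥ 2`, any tangent vector `v` at a point `x` of an open set `W ⊆ ℝ^m`
can be realized locally by a smooth divergence-free vector field compactly supported in `W`. -/
theorem exists_divergence_free_field_locally_constant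
    (m : ℕ) (hm : 2 ≤ m)
    (x v : EuclideanSpace ℝ (Fin m))
    (W : Set (EuclideanSpace ℝ (Fin m))) (hW : IsOpen W) (hxW : x ∈ W) :
    ∃ X : EuclideanSpace ℝ (Fin m) → EuclideanSpace ℝ (Fin m),
      ContDiff ℝ (⊤ : ℕ∞) X ∧ HasCompactSupport X ∧ tsupport X ⊆ W ∧
      (∀ y, LinearMap.trace ℝ (EuclideanSpace ℝ (Fin m)) (fderiv ℝ X y).toLinearMap = 0) ∧
      ∃ U : Set (EuclideanSpace ℝ (Fin m)), IsOpen U ∧ x ∈ U ∧ ∀ y ∈ U, X y = v := by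
  -- a unit vector orthogonal to v
  obtain ⟨L, w, hLw, hLv⟩ : ∃ (L : EuclideanSpace ℝ (Fin m) →L[ℝ] ℝ)
      (w : EuclideanSpace ℝ (Fin m)), L w = 1 ∧ L v = 0 := by
    have hk : LinearMap.ker (innerSL ℝ v).toLinearMap ≠ ⊥ := by
      apply LinearMap.ker_ne_bot_of_finrank_lt
      simp
      omega
    obtain ⟨w, hw, hw0⟩ := Submodule.exists_mem_ne_zero_of_ne_bot hk
    have hvw : inner ℝ v w = 0 := by simpa using hw
    refine ⟨(inner ℝ w w)⁻¹ • innerSL ℝ w, w, ?_, ?_⟩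
    · have : inner ℝ w w ≠ 0 := inner_self_ne_zero.2 hw0
      simp only [_root_.smul_apply, innerSL_apply_apply, smul_eq_mul]
      exact inv_mul_cancel₀ this
    · simp only [_root_.smul_apply, innerSL_apply_apply, smul_eq_mul]
      rw [real_inner_comm v w, hvw, mul_zero]
  -- a bump function
  obtain ⟨r, hr, hrW⟩ := Metric.isOpen_iff.1 hW x hxW
  let φ : ContDiffBump x := ⟨r / 4, r / 2, by positivity, by linarith⟩
  let g : EuclideanSpace ℝ (Fin m) → ℝ := fun y => φ y * L (y - x)
  have hg : ContDiff ℝ (⊤ : ℕ∞) g := φ.contDiff.mul (L.contDiff.comp (contDiff_id.sub contDiff_const))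
  have hg' : ContDiff ℝ (⊤ : ℕ∞) (fderiv ℝ g) := hg.fderiv_right (by simp)
  have hgs : tsupport g ⊆ Metric.closedBall x (r / 2) := by
    refine (tsupport_mul_subset_left (f := φ) (g := fun y => L (y - x))).trans ?_
    rw [φ.tsupport_eq]
  let X : EuclideanSpace ℝ (Fin m) → EuclideanSpace ℝ (Fin m) :=
    fun y => fderiv ℝ g y w • v - fderiv ℝ g y v • w
  have hXs : tsupport X ⊆ tsupport g := by
    refine closure_minimal ?_ (isClosed_tsupport g)
    intro y hy
    by_contra hn
    have h0 : fderiv ℝ g y = 0 := by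
      by_contra h
      exact hn (support_fderiv_subset ℝ h)
    exact hy (by simp [X, h0])
  refine ⟨X, ?_, ?_, ?_, ?_, Metric.ball x (r / 4), Metric.isOpen_ball,
    Metric.mem_ball_self (by positivity), ?_⟩
  · exact ((hg'.clm_apply contDiff_const).smul contDiff_const).sub
      ((hg'.clm_apply contDiff_const).smul contDiff_const)
  · exact (isCompact_closedBall x (r / 2)).of_isClosed_subset (isClosed_tsupport X)
      (hXs.trans hgs)
  · exact (hXs.trans hgs).trans ((Metric.closedBall_subset_ball (by linarith)).trans hrW)
  · intro y
    have hd : HasFDerivAt (fderiv ℝ g) (fderiv ℝ (fderiv ℝ g) y) y :=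
      (hg'.differentiable (by simp) y).hasFDerivAt
    have hda : ∀ u, HasFDerivAt (fun z => fderiv ℝ g z u)
        ((fderiv ℝ (fderiv ℝ g) y).flip u) y := by
      intro u
      have h := hd.clm_apply (hasFDerivAt_const u y)
      rwa [ContinuousLinearMap.comp_zero, zero_add] at h
    have hX : HasFDerivAt X (((fderiv ℝ (fderiv ℝ g) y).flip w).smulRight v
        - ((fderiv ℝ (fderiv ℝ g) y).flip v).smulRight w) y :=
      ((hda w).smul_const v).sub ((hda v).smul_const w)
    have hsymm : IsSymmSndFDerivAt ℝ g y :=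
      hg.contDiffAt.isSymmSndFDerivAt (by
        simp only [minSmoothness_of_isRCLikeNormedField]
        exact WithTop.coe_le_coe.2 (le_top : (2 : ℕ∞) ≤ ⊤))
    have htr : ∀ (f : EuclideanSpace ℝ (Fin m) →L[ℝ] ℝ) (u : EuclideanSpace ℝ (Fin m)),
        LinearMap.trace ℝ (EuclideanSpace ℝ (Fin m)) (f.smulRight u).toLinearMap = f u := by
      intro f u
      exact LinearMap.trace_smulRight f.toLinearMap u
    rw [hX.fderiv, ContinuousLinearMap.toLinearMap_sub, map_sub, htr, htr]
    simp only [ContinuousLinearMap.flip_apply]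
    rw [hsymm.eq v w, sub_self]
  · intro y hy
    have he : g =ᶠ[nhds y] fun z => L (z - x) := by
      filter_upwards [Metric.isOpen_ball.mem_nhds hy] with z hz
      have : φ z = 1 := φ.one_of_mem_closedBall (Metric.ball_subset_closedBall hz)
      simp [g, this]
    have hd : fderiv ℝ g y = L := by
      rw [he.fderiv_eq]
      exact (L.hasFDerivAt.comp y ((hasFDerivAt_id y).sub_const x)).fderiv
    simp [X, hd, hLw, hLv]
end

section
/- Let m ≥ 2, let U ⊆ ℝ^m be an open connected set, and let f : U → ℝ be smooth on U. Suppose that for every smooth divergence-free vector field X : ℝ^m → ℝ^m with compact support contained in U, the directional derivative of f along X vanishes on U, i.e. ⟨X(x), ∇f(x)⟩ = 0 for all x ∈ U. Then f is constant on U. -/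
/-- Any two-plane rotation field of a stream function `ψ` gives a divergence-free field. -/
lemma streamField_trace {E : Type*} [NormedAddCommGroup E] [NormedSpace ℝ E]
    [FiniteDimensional ℝ E] (ψ : E → ℝ) (hψ : ContDiff ℝ (⊤ : ℕ∞) ψ) (a b y : E) :
    LinearMap.trace ℝ E
      (fderiv ℝ (fun z => fderiv ℝ ψ z b • a - fderiv ℝ ψ z a • b) y).toLinearMap = 0 := by
  have hd : DifferentiableAt ℝ (fderiv ℝ ψ) y :=
    ((hψ.fderiv_right (m := ((⊤ : ℕ∞) : WithTop ℕ∞)) (by simp)).differentiable (by simp)) y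
  have hsym : IsSymmSndFDerivAt ℝ ψ y :=
    (contDiff_infty.1 hψ 2).contDiffAt.isSymmSndFDerivAt (by simp)
  have key : ∀ v w : E, HasFDerivAt (fun z => fderiv ℝ ψ z v • w)
      (((fderiv ℝ (fderiv ℝ ψ) y).flip v).smulRight w) y := by
    intro v w
    have h1 : HasFDerivAt (fun z => fderiv ℝ ψ z v) ((fderiv ℝ (fderiv ℝ ψ) y).flip v) y := by
      have := (ContinuousLinearMap.apply ℝ ℝ v).hasFDerivAt.comp y hd.hasFDerivAt
      exact this
    exact h1.smul_const w
  rw [((key b a).fun_sub (key a b)).fderiv]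
  have : (((fderiv ℝ (fderiv ℝ ψ) y).flip b).smulRight a
      - ((fderiv ℝ (fderiv ℝ ψ) y).flip a).smulRight b).toLinearMap
      = ((fderiv ℝ (fderiv ℝ ψ) y).flip b).toLinearMap.smulRight a
      - ((fderiv ℝ (fderiv ℝ ψ) y).flip a).toLinearMap.smulRight b := by
    ext v; rfl
  rw [this, map_sub, LinearMap.trace_smulRight, LinearMap.trace_smulRight]
  simp [hsym a b]

/-- For `m ≥ 2` and `U ⊆ ℝ^m` open and connected, a function smooth on `U`
whose directional derivative along every smooth divergence-free vector field compactly
supported in `U` vanishes on `U` is constant on `U`. -/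
theorem constant_of_deriv_along_divergence_free_fields_eq_zero
    (m : ℕ) (hm : 2 ≤ m)
    (U : Set (EuclideanSpace ℝ (Fin m))) (hU : IsOpen U) (hUconn : IsConnected U)
    (f : EuclideanSpace ℝ (Fin m) → ℝ) (hf : ContDiffOn ℝ (⊤ : ℕ∞) f U)
    (hinv : ∀ X : EuclideanSpace ℝ (Fin m) → EuclideanSpace ℝ (Fin m),
      ContDiff ℝ (⊤ : ℕ∞) X → HasCompactSupport X → tsupport X ⊆ U →
      (∀ y, LinearMap.trace ℝ (EuclideanSpace ℝ (Fin m)) (fderiv ℝ X y).toLinearMap = 0) →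
      ∀ x ∈ U, fderiv ℝ f x (X x) = 0) :
    ∀ x ∈ U, ∀ y ∈ U, f x = f y := by
  have hzero : U.EqOn (fderiv ℝ f) 0 := by
    intro x hx
    have hbasis : ∀ i : Fin m, fderiv ℝ f x (EuclideanSpace.single i 1) = 0 := by
      intro i
      obtain ⟨j, hji⟩ : ∃ j : Fin m, j ≠ i := by
        have : Nontrivial (Fin m) := Fin.nontrivial_iff_two_le.mpr hm
        exact exists_ne i
      obtain ⟨χ, hχU, hχc, hχs, -, hχx⟩ :=
        exists_contDiff_tsupport_subset (n := ⊤) (hU.mem_nhds hx)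
      let l : EuclideanSpace ℝ (Fin m) →L[ℝ] ℝ := EuclideanSpace.proj j
      let ψ : EuclideanSpace ℝ (Fin m) → ℝ := fun y => χ y * (l y - l x)
      have hψ : ContDiff ℝ (⊤ : ℕ∞) ψ := hχs.mul (l.contDiff.sub contDiff_const)
      have hψt : tsupport ψ ⊆ tsupport χ := tsupport_mul_subset_left
      have hψd : fderiv ℝ ψ x = l := by
        have h1 : HasFDerivAt χ (fderiv ℝ χ x) x :=
          (hχs.differentiable (by simp) x).hasFDerivAt
        have h2 : HasFDerivAt (fun y => l y - l x) l x := l.hasFDerivAt.sub_const _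
        have h3 := (h1.fun_mul h2).fderiv
        simp only [hχx, sub_self, zero_smul, one_smul, add_zero] at h3
        exact h3
      let a : EuclideanSpace ℝ (Fin m) := EuclideanSpace.single i 1
      let b : EuclideanSpace ℝ (Fin m) := EuclideanSpace.single j 1
      let X : EuclideanSpace ℝ (Fin m) → EuclideanSpace ℝ (Fin m) :=
        fun z => fderiv ℝ ψ z b • a - fderiv ℝ ψ z a • b
      have hXt : tsupport X ⊆ tsupport χ :=
        ((tsupport_comp_subset (g := fun L : EuclideanSpace ℝ (Fin m) →L[ℝ] ℝ =>
          L b • a - L a • b) (by simp) (fderiv ℝ ψ)).trans (tsupport_fderiv_subset ℝ)).trans hψt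
      have hψ' : ContDiff ℝ (⊤ : ℕ∞) (fderiv ℝ ψ) := hψ.fderiv_right (by simp)
      have hXs : ContDiff ℝ (⊤ : ℕ∞) X :=
        ((hψ'.clm_apply contDiff_const).smul contDiff_const).sub
          ((hψ'.clm_apply contDiff_const).smul contDiff_const)
      have hXc : HasCompactSupport X := hχc.of_isClosed_subset (isClosed_tsupport X) hXt
      have h := hinv X hXs hXc (hXt.trans hχU) (streamField_trace ψ hψ a b) x hx
      have hXx : X x = a := by
        simp [X, hψd, l, a, b, hji]
      rwa [hXx] at h
    have hlin : (fderiv ℝ f x).toLinearMap = 0 := by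
      refine (EuclideanSpace.basisFun (Fin m) ℝ).toBasis.ext fun i => ?_
      simpa using hbasis i
    ext v
    exact LinearMap.congr_fun hlin v
  intro x hx y hy
  exact hU.is_const_of_fderiv_eq_zero hUconn.isPreconnected
    (hf.differentiableOn (by simp)) hzero hx hy
end
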